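/- arXiv:1103.4794 — 3 statements merged into one kernel-verified Lean document; each statement's English description precedes it below -/
import Mathlib

section
/- Let K be a field, A a commutative K-algebra, Λ a finite type, and (V_λ)_{λ∈Λ} a family of K-submodules of A forming an internal direct sum decomposition of A (the V_λ are independent and their sum is all of A), such that V_λ·V_λ ⊆ V_λ for every λ and V_λ·V_μ = 0 for all λ ≠ μ. Let H be a K-submodule of A such that H equals the sum of its intersections with the V_λ, i.e., H = Σ_λ (H ∩ V_λ), and such that the positive submodule-powers of H span A, i.e., ⨆_{n≥1} H^n = A. Then for every λ, the positive powers of H ∩ V_λ span V_λ: ⨆_{n≥1} (H ∩ V_λ)^n = V_λ. -/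
/-!
Since the `V l` annihilate each other, every mixed product in the expansion of
`H ^ (n + 1) = (⨆ l, H ⊓ V l) ^ (n + 1)` vanishes, which leaves `⨆ l, (H ⊓ V l) ^ (n + 1)`.
The `l`-th term lies in `V l`, so independence of the `V l` recovers it by intersecting with `V l`.
-/

theorem iSup_inf_eq_of_le_of_iSupIndep {ι α : Type*} [CompleteLattice α] [IsModularLattice α]
    {f g : ι → α} (hfg : f ≤ g) (hg : iSupIndep g) (i : ι) : (⨆ j, f j) ⊓ g i = f i := by
  have hdisj : Disjoint (⨆ (j) (_ : j ≠ i), f j) (g i) :=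
    (hg i).symm.mono_left (iSup₂_mono fun j _ ↦ hfg j)
  rw [iSup_split_single f i, sup_inf_assoc_of_le _ (hfg i), hdisj.eq_bot, sup_bot_eq]

theorem pow_succ_le_self_of_mul_self_le {M : Type*} [Monoid M] [Preorder M] [MulRightMono M]
    {a : M} (ha : a * a ≤ a) (n : ℕ) : a ^ (n + 1) ≤ a := by
  induction n with
  | zero => rw [zero_add, pow_one]
  | succ n ih =>
    calc a ^ (n + 1 + 1) = a ^ (n + 1) * a := pow_succ a (n + 1)
      _ ≤ a * a := by gcongr
      _ ≤ a := ha

theorem iSup_pow_succ_of_pairwise_mul_eq_bot {R A ι : Type*} [CommSemiring R] [Semiring A]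
    [Algebra R A] {W : ι → Submodule R A} (hW : Pairwise fun i j ↦ W i * W j = ⊥) (n : ℕ) :
    (⨆ i, W i) ^ (n + 1) = ⨆ i, W i ^ (n + 1) := by
  induction n with
  | zero => simp only [zero_add, pow_one]
  | succ n ih =>
    have diagonal (i : ι) : ⨆ j, W i ^ (n + 1) * W j = W i ^ (n + 1 + 1) := by
      refine le_antisymm (iSup_le fun j ↦ ?_) (le_iSup_of_le i (pow_succ _ _).le)
      obtain rfl | hij := eq_or_ne i j
      · exact (pow_succ _ _).ge
      · rw [pow_succ, mul_assoc, hW hij, Submodule.mul_bot]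
        exact bot_le
    calc (⨆ i, W i) ^ (n + 1 + 1) = (⨆ i, W i ^ (n + 1)) * ⨆ j, W j := by rw [pow_succ, ih]
      _ = ⨆ i, ⨆ j, W i ^ (n + 1) * W j := by simp_rw [Submodule.iSup_mul, Submodule.mul_iSup]
      _ = ⨆ i, W i ^ (n + 1 + 1) := iSup_congr diagonal

theorem weight_spaces_spanned_by_powers_general {R A ι : Type*} [CommRing R] [Ring A]
    [Algebra R A] {V : ι → Submodule R A} (hV : iSupIndep V) (hmul_self : ∀ i, V i * V i ≤ V i)
    (hmul_ne : Pairwise fun i j ↦ V i * V j = ⊥) {H : Submodule R A} (hH : H = ⨆ i, H ⊓ V i)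
    (i : ι) : (⨆ n : ℕ, H ^ (n + 1)) ⊓ V i = ⨆ n : ℕ, (H ⊓ V i) ^ (n + 1) := by
  have horth : Pairwise fun i j ↦ (H ⊓ V i) * (H ⊓ V j) = ⊥ := fun j k hjk ↦
    le_bot_iff.mp ((mul_le_mul' inf_le_right inf_le_right).trans (hmul_ne hjk).le)
  have hpow (n : ℕ) : H ^ (n + 1) = ⨆ j, (H ⊓ V j) ^ (n + 1) := by
    rw [← iSup_pow_succ_of_pairwise_mul_eq_bot horth, ← hH]
  have hle (j : ι) : ⨆ n : ℕ, (H ⊓ V j) ^ (n + 1) ≤ V j := iSup_le fun n ↦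
    (pow_le_pow_left' inf_le_right _).trans (pow_succ_le_self_of_mul_self_le (hmul_self j) n)
  calc (⨆ n : ℕ, H ^ (n + 1)) ⊓ V i = (⨆ j, ⨆ n : ℕ, (H ⊓ V j) ^ (n + 1)) ⊓ V i := by
        rw [iSup_congr hpow, iSup_comm]
    _ = ⨆ n : ℕ, (H ⊓ V i) ^ (n + 1) := iSup_inf_eq_of_le_of_iSupIndep hle hV i

/-- Let `A` be a commutative `K`-algebra with an internal direct sum
decomposition `A = ⊕_λ V_λ` (λ in a finite type) by submodules with
`V_λ · V_λ ⊆ V_λ` and `V_λ · V_μ = 0` for `λ ≠ μ`.  If `H` is a submodule with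
`H = Σ_λ (H ⊓ V_λ)` whose positive powers span `A`, then for every `λ` the positive
powers of `H ⊓ V_λ` span `V_λ`. -/
theorem weight_spaces_spanned_by_powers {K A Λ : Type*} [Field K] [CommRing A]
    [Algebra K A] [Finite Λ] [DecidableEq Λ]
    (V : Λ → Submodule K A)
    (hdsum : DirectSum.IsInternal V)
    (hmul_self : ∀ l, V l * V l ≤ V l)
    (hmul_ne : ∀ l m, l ≠ m → V l * V m = ⊥)
    (H : Submodule K A)
    (hH : H = ⨆ l, H ⊓ V l)
    (hgen : (⨆ n : ℕ, H ^ (n + 1)) = ⊤) :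
    ∀ l, (⨆ n : ℕ, (H ⊓ V l) ^ (n + 1)) = V l := by
  intro l
  rw [← weight_spaces_spanned_by_powers_general hdsum.submodule_iSupIndep hmul_self
    (fun l m ↦ hmul_ne l m) hH l, hgen, top_inf_eq]
end

section
/- Let V be a finite-dimensional complex vector space with an internal direct sum decomposition V = ⊕_{p=0}^{l−1} W_p for some l ≥ 1. Let e, h, f be endomorphisms of V satisfying the sl₂-relations h∘e − e∘h = 2e, h∘f − f∘h = −2f, and e∘f − f∘e = h. Assume e has degree +1 and h has degree 0 with respect to the grading: e(W_p) ⊆ W_{p+1} for p < l−1, e(W_{l−1}) = 0, and h(W_p) ⊆ W_p for every p. Then for every p and every nonzero v ∈ W_p with h(v) = c·v for some c ∈ ℂ, the eigenvalue c is an integer m satisfying p − (l−1) ≤ m ≤ p. -/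
/-!
A degree `+1` operator on a finite grading is nilpotent, and for an `sl₂`-triple the nilpotency of
`e` alone controls the weights. Let `v` have weight `c`, and let `i` be the last exponent with
`e ^ i v ≠ 0`. Then `e ^ (i + 1) (f v) = (i + 1) (c + i) e ^ i v`, so either `c + i = 0` or `f v` is
a vector of the same kind with `c + i` lowered by one and `i` raised by one; as `i` cannot grow
forever, `c + i` is a natural number. Since `e ^ i v` lies in degree `p + i ≤ l - 1`, this gives
integrality and the lower bound. For the upper bound, subtracting multiples of `f ^ k w` with `w`
primitive shows that a vector of weight `n ≥ 0` lies in the range of `e ^ n`, which meets only the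
degrees `≥ n`.
-/

open LieModule

section Sl2Representation

section CommRing

variable {R L M : Type*} [CommRing R] [LieRing L] [LieAlgebra R L] [AddCommGroup M] [Module R M]
  [LieRingModule L M] [LieModule R L M] {h e f : L} {v : M} {c : R}

lemma lie_h_lie_f (t : IsSl2Triple h e f) (hv : ⁅h, v⁆ = c • v) :
    ⁅h, ⁅f, v⁆⁆ = (c - 2) • ⁅f, v⁆ := by
  rw [leibniz_lie, t.lie_lie_smul_f R, hv, neg_lie, smul_lie, lie_smul]
  module

lemma toEnd_e_pow_succ_lie_f (t : IsSl2Triple h e f) (hv : ⁅h, v⁆ = c • v) (n : ℕ) :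
    (toEnd R L M e ^ (n + 1)) ⁅f, v⁆ =
      ⁅f, (toEnd R L M e ^ (n + 1)) v⁆ + ((n + 1) * (c + n)) • (toEnd R L M e ^ n) v := by
  induction n with
  | zero =>
    simp only [zero_add, pow_one, toEnd_apply_apply, leibniz_lie e, t.lie_e_f, hv, pow_zero,
      Module.End.one_apply, Nat.cast_zero, add_zero, one_mul, add_comm]
  | succ n ih =>
    rw [← IsSl2Triple.lie_e_pow_toEnd_e, ih, lie_add, leibniz_lie e, t.lie_e_f,
      t.lie_h_pow_toEnd_e hv, lie_smul, IsSl2Triple.lie_e_pow_toEnd_e,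
      IsSl2Triple.lie_e_pow_toEnd_e]
    push_cast
    module

lemma exists_nat_eq_weight_add [IsDomain R] [CharZero R] [Module.IsTorsionFree R M]
    (t : IsSl2Triple h e f) (he : IsNilpotent (toEnd R L M e)) (hv : ⁅h, v⁆ = c • v) {i : ℕ}
    (hi : (toEnd R L M e ^ i) v ≠ 0) (hi' : (toEnd R L M e ^ (i + 1)) v = 0) :
    ∃ s : ℕ, c + i = s := by
  obtain ⟨N, hN⟩ := he
  obtain ⟨d, hd⟩ : ∃ d, N ≤ i + d := ⟨N, Nat.le_add_left N i⟩
  induction d generalizing i v c with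
  | zero => exact absurd (LinearMap.congr_fun (pow_eq_zero_of_le hd hN) v) hi
  | succ d ih =>
    by_cases hci : c + i = 0
    · exact ⟨0, by rw [hci, Nat.cast_zero]⟩
    have e_pow_lie_f : (toEnd R L M e ^ (i + 1)) ⁅f, v⁆ =
        ((i + 1) * (c + i)) • (toEnd R L M e ^ i) v := by
      rw [toEnd_e_pow_succ_lie_f t hv, hi', lie_zero, zero_add]
    have e_pow_lie_f_ne_zero : (toEnd R L M e ^ (i + 1)) ⁅f, v⁆ ≠ 0 := by
      rw [e_pow_lie_f]
      exact smul_ne_zero (mul_ne_zero (Nat.cast_add_one_ne_zero i) hci) hi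
    have e_pow_succ_lie_f : (toEnd R L M e ^ (i + 1 + 1)) ⁅f, v⁆ = 0 := by
      rw [pow_succ', Module.End.mul_apply, e_pow_lie_f, map_smul, ← Module.End.mul_apply,
        ← pow_succ', hi', smul_zero]
    obtain ⟨s, hs⟩ := ih (lie_h_lie_f t hv) e_pow_lie_f_ne_zero e_pow_succ_lie_f (by lia)
    refine ⟨s + 1, ?_⟩
    push_cast at hs ⊢
    linear_combination hs

lemma exists_toEnd_e_pow_toEnd_f_pow_eq_smul [IsDomain R] [CharZero R] {t : IsSl2Triple h e f}
    {n : ℕ} (P : t.HasPrimitiveVectorWith v (n : R)) {a b : ℕ} (hab : a + b ≤ n) :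
    ∃ s : R, s ≠ 0 ∧
      (toEnd R L M e ^ a) ((toEnd R L M f ^ (a + b)) v) = s • (toEnd R L M f ^ b) v := by
  induction a with
  | zero => exact ⟨1, one_ne_zero, by simp⟩
  | succ a ih =>
    obtain ⟨s, hs, ha⟩ := ih (by lia)
    have factor_ne_zero : (((a + b : ℕ) : R) + 1) * (n - (a + b : ℕ)) ≠ 0 :=
      mul_ne_zero (Nat.cast_add_one_ne_zero _)
        (sub_ne_zero.2 (Nat.cast_injective.ne (by lia)))
    refine ⟨_, mul_ne_zero factor_ne_zero hs, ?_⟩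
    rw [pow_succ, Module.End.mul_apply, toEnd_apply_apply, add_right_comm a 1 b,
      P.lie_e_pow_succ_toEnd_f, map_smul, ha, smul_smul]

end CommRing

lemma mem_range_toEnd_e_pow {K L M : Type*} [Field K] [CharZero K] [LieRing L] [LieAlgebra K L]
    [AddCommGroup M] [Module K M] [LieRingModule L M] [LieModule K L M] {h e f : L}
    (t : IsSl2Triple h e f) {v : M} {n k : ℕ} (hv : ⁅h, v⁆ = (n : K) • v)
    (hk : (toEnd K L M e ^ k) v = 0) :
    v ∈ LinearMap.range (toEnd K L M e ^ n) := by
  induction k generalizing v with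
  | zero =>
    obtain rfl : v = 0 := by simpa using hk
    exact zero_mem _
  | succ k ih =>
    by_cases hw : (toEnd K L M e ^ k) v = 0
    · exact ih hv hw
    set w := (toEnd K L M e ^ k) v with hw_def
    have P : t.HasPrimitiveVectorWith w ((n + 2 * k : ℕ) : K) :=
      { ne_zero := hw
        lie_h := by simpa using t.lie_h_pow_toEnd_e hv k
        lie_e := by rw [hw_def, IsSl2Triple.lie_e_pow_toEnd_e, hk] }
    set x := (toEnd K L M f ^ k) w
    have x_weight : ⁅h, x⁆ = (n : K) • x := by
      rw [P.lie_h_pow_toEnd_f]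
      push_cast
      rw [add_sub_cancel_right]
    obtain ⟨s, hs, e_pow_x⟩ : ∃ s : K, s ≠ 0 ∧ (toEnd K L M e ^ k) x = s • w :=
      exists_toEnd_e_pow_toEnd_f_pow_eq_smul P (a := k) (b := 0) (by lia)
    obtain ⟨r, hr, e_pow_f_pow⟩ := exists_toEnd_e_pow_toEnd_f_pow_eq_smul P (a := n) (b := k)
      (by lia)
    have x_mem : x ∈ LinearMap.range (toEnd K L M e ^ n) :=
      (Submodule.smul_mem_iff _ hr).1 ⟨_, e_pow_f_pow⟩
    have sub_mem : v - s⁻¹ • x ∈ LinearMap.range (toEnd K L M e ^ n) := by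
      apply ih
      · rw [lie_sub, lie_smul, hv, x_weight, smul_sub, smul_comm]
      · rw [map_sub, map_smul, e_pow_x, inv_smul_smul₀ hs, sub_self]
    exact (Submodule.sub_mem_iff_left _ (Submodule.smul_mem _ _ x_mem)).1 sub_mem

end Sl2Representation

section DegreeOne

variable {R M : Type*} [Semiring R] [AddCommMonoid M] [Module R M] {W : ℕ → Submodule R M}
  {e : Module.End R M}

lemma pow_apply_mem_of_degree_one (he : ∀ p, ∀ x ∈ W p, e x ∈ W (p + 1)) (n : ℕ) {p : ℕ} {x : M}
    (hx : x ∈ W p) : (e ^ n) x ∈ W (p + n) := by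
  induction n with
  | zero => exact hx
  | succ n ih =>
    rw [pow_succ', Module.End.mul_apply]
    exact he _ _ ih

lemma range_pow_le_iSup_of_degree_one (hW : ⨆ p, W p = ⊤)
    (he : ∀ p, ∀ x ∈ W p, e x ∈ W (p + 1)) (n : ℕ) :
    LinearMap.range (e ^ n) ≤ ⨆ p, W (p + n) := by
  rw [LinearMap.range_eq_map, ← hW, Submodule.map_iSup]
  exact iSup_mono fun p => Submodule.map_le_iff_le_comap.2 fun _ hx =>
    pow_apply_mem_of_degree_one he n hx

lemma isNilpotent_of_degree_one (hW : ⨆ p, W p = ⊤) {l : ℕ} (hl : ∀ p, l ≤ p → W p = ⊥)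
    (he : ∀ p, ∀ x ∈ W p, e x ∈ W (p + 1)) : IsNilpotent e := by
  refine ⟨l, LinearMap.range_eq_bot.1 (eq_bot_iff.2 ?_)⟩
  refine (range_pow_le_iSup_of_degree_one hW he l).trans (iSup_le fun p => ?_)
  exact (hl _ (Nat.le_add_left l p)).le

lemma disjoint_range_pow_of_degree_one (hW : ⨆ p, W p = ⊤) (hind : iSupIndep W)
    (he : ∀ p, ∀ x ∈ W p, e x ∈ W (p + 1)) {p n : ℕ} (hpn : p < n) :
    Disjoint (W p) (LinearMap.range (e ^ n)) := by
  refine (hind p).mono_right ((range_pow_le_iSup_of_degree_one hW he n).trans ?_)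
  exact iSup_le fun q => le_iSup₂_of_le (q + n) (by lia) le_rfl

end DegreeOne

section Graded

variable {K V : Type*} [Field K] [CharZero K] [AddCommGroup V] [Module K V] {l : ℕ}
  {W : ℕ → Submodule K V}

lemma exists_int_eq_weight_of_degree_one {L : Type*} [LieRing L] [LieAlgebra K L]
    [LieRingModule L V] [LieModule K L V] {e h f : L} (hWbot : ∀ p, l ≤ p → W p = ⊥)
    (hW : DirectSum.IsInternal W) (t : IsSl2Triple h e f)
    (hdeg_e : ∀ p, ∀ x ∈ W p, ⁅e, x⁆ ∈ W (p + 1)) {p : ℕ} {v : V} (hv : v ∈ W p) (hv0 : v ≠ 0)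
    {c : K} (hc : ⁅h, v⁆ = c • v) :
    ∃ m : ℤ, c = m ∧ (p : ℤ) - ((l : ℤ) - 1) ≤ m ∧ m ≤ p := by
  have hnil : IsNilpotent (toEnd K L V e) :=
    isNilpotent_of_degree_one hW.submodule_iSup_eq_top hWbot hdeg_e
  obtain ⟨i, hi, hi'⟩ : ∃ i, (toEnd K L V e ^ i) v ≠ 0 ∧ (toEnd K L V e ^ (i + 1)) v = 0 := by
    obtain ⟨N, hN⟩ := hnil
    exact Nat.exists_not_and_succ_of_not_zero_of_exists
      (p := fun j => (toEnd K L V e ^ j) v = 0) hv0 ⟨N, LinearMap.congr_fun hN v⟩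
  have hpi : p + i < l := by
    by_contra! hle
    have e_pow_v_mem : (toEnd K L V e ^ i) v ∈ W (p + i) :=
      pow_apply_mem_of_degree_one hdeg_e i hv
    exact hi ((Submodule.mem_bot K).1 (hWbot _ hle ▸ e_pow_v_mem))
  obtain ⟨s, hs⟩ : ∃ s : ℕ, c + i = s := exists_nat_eq_weight_add t hnil hc hi hi'
  obtain rfl : c = ((s - i : ℤ) : K) := by
    push_cast
    exact eq_sub_of_add_eq hs
  refine ⟨s - i, rfl, by lia, ?_⟩
  by_contra! hlt
  obtain ⟨n, hn⟩ := Int.eq_ofNat_of_zero_le (a := s - i) (by lia)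
  have v_mem_range : v ∈ LinearMap.range (toEnd K L V e ^ n) :=
    mem_range_toEnd_e_pow t (by simpa [hn] using hc) hi'
  have hdisj : Disjoint (W p) (LinearMap.range (toEnd K L V e ^ n)) :=
    disjoint_range_pow_of_degree_one hW.submodule_iSup_eq_top hW.submodule_iSupIndep hdeg_e
      (by lia)
  exact hv0 (Submodule.disjoint_def.1 hdisj v hv v_mem_range)

attribute [local instance] LieRing.ofAssociativeRing

theorem sl2_weights_range_on_graded_piece_general {e h f : V →ₗ[K] V}
    (hWbot : ∀ p, l ≤ p → W p = ⊥) (hW : DirectSum.IsInternal W)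
    (he2 : h ∘ₗ e - e ∘ₗ h = (2 : K) • e)
    (hf2 : h ∘ₗ f - f ∘ₗ h = (-2 : K) • f) (hef : e ∘ₗ f - f ∘ₗ e = h)
    (hdeg_e : ∀ p, ∀ x ∈ W p, e x ∈ W (p + 1)) {p : ℕ} {v : V} (hv : v ∈ W p) (hv0 : v ≠ 0)
    {c : K} (hc : h v = c • v) :
    ∃ m : ℤ, c = m ∧ (p : ℤ) - ((l : ℤ) - 1) ≤ m ∧ m ≤ p := by
  -- `IsSl2Triple` demands `h ≠ 0`, so the zero triple is treated apart.
  rcases eq_or_ne h 0 with rfl | hh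
  · have hpl : p < l := by
      by_contra! hle
      exact hv0 ((Submodule.mem_bot K).1 (hWbot p hle ▸ hv))
    have hc0 : c = 0 := (smul_eq_zero.1 hc.symm).resolve_right hv0
    exact ⟨0, by rw [hc0, Int.cast_zero], by lia, by lia⟩
  · have t : IsSl2Triple h e f :=
      { h_ne_zero := hh
        lie_e_f := hef
        lie_h_e_nsmul := he2.trans (ofNat_smul_eq_nsmul K 2 e)
        lie_h_f_nsmul := hf2.trans (by rw [neg_smul, ofNat_smul_eq_nsmul K 2 f]) }
    exact exists_int_eq_weight_of_degree_one hWbot hW t hdeg_e hv hv0 hc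

end Graded

/-- Let `V = ⊕_{p=0}^{l-1} W_p` be a finite-dimensional graded complex
vector space (encoded by `W : ℕ → Submodule ℂ V` with `W p = ⊥` for `p ≥ l`), and
let `(e, h, f)` be an `sl₂`-triple of endomorphisms with `e` of degree `+1` and `h`
of degree `0`.  Then every `h`-eigenvalue on `W_p` is an integer `m` with
`p - (l-1) ≤ m ≤ p`. -/
theorem sl2_weights_range_on_graded_piece {V : Type*} [AddCommGroup V] [Module ℂ V]
    [FiniteDimensional ℂ V] (l : ℕ) (hl : 1 ≤ l)
    (W : ℕ → Submodule ℂ V) (hWbot : ∀ p, l ≤ p → W p = ⊥)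
    (hW : DirectSum.IsInternal W)
    (e h f : V →ₗ[ℂ] V)
    (he2 : h ∘ₗ e - e ∘ₗ h = (2 : ℂ) • e)
    (hf2 : h ∘ₗ f - f ∘ₗ h = (-2 : ℂ) • f)
    (hef : e ∘ₗ f - f ∘ₗ e = h)
    (hdeg_e : ∀ p, ∀ x ∈ W p, e x ∈ W (p + 1))
    (hdeg_h : ∀ p, ∀ x ∈ W p, h x ∈ W p) :
    ∀ p, p < l → ∀ v ∈ W p, v ≠ 0 → ∀ c : ℂ, h v = c • v →
      ∃ m : ℤ, c = (m : ℂ) ∧ (p : ℤ) - ((l : ℤ) - 1) ≤ m ∧ m ≤ (p : ℤ) := by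
  exact fun p _ v hv hv0 c hc =>
    sl2_weights_range_on_graded_piece_general hWbot hW he2 hf2 hef hdeg_e hv hv0 hc
end

section
/- Let V be a finite-dimensional complex vector space with an internal direct sum decomposition V = ⊕_{p=0}^{l−1} W_p for some l ≥ 1. Let e, h, f be endomorphisms of V satisfying the sl₂-relations h∘e − e∘h = 2e, h∘f − f∘h = −2f, and e∘f − f∘e = h. Assume e has degree +1 and h has degree 0 with respect to the grading: e(W_p) ⊆ W_{p+1} for p < l−1, e(W_{l−1}) = 0, and h(W_p) ⊆ W_p for every p. Then for every p and every nonzero v ∈ W_p with e(v) = 0 and h(v) = c·v for some c ∈ ℂ, the eigenvalue c is an integer m satisfying 0 ≤ m ≤ p. -/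
/-!
A highest weight vector `v` of weight `n ∈ ℕ` satisfies `eⁿ fⁿ v = (n!)² v`, so a nonzero multiple
of `v` lies in the image of `eⁿ`. Since `e` raises the degree by one and the grading starts in
degree `0`, that image lives in degrees at least `n`; hence `v` cannot be homogeneous of degree
`p < n`.
-/

open LieModule Module
open scoped Nat

section DegreeOne

variable {R M : Type*} [Semiring R] [AddCommMonoid M] [Module R M] {e : End R M}

lemma le_comap_pow_of_le_comap_add_one {ι : Type*} [AddMonoidWithOne ι] {W : ι → Submodule R M}
    (he : ∀ q, W q ≤ (W (q + 1)).comap e) (n : ℕ) (q : ι) :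
    W q ≤ (W (q + n)).comap (e ^ n) := by
  induction n with
  | zero => simp [End.one_eq_id]
  | succ n ih =>
    intro x hx
    rw [Submodule.mem_comap, pow_succ', End.mul_apply, Nat.cast_succ, ← add_assoc]
    exact he (q + n) (ih hx)

lemma range_pow_le_iSup_add {ι : Type*} [AddMonoidWithOne ι] {W : ι → Submodule R M}
    (hW : ⨆ q, W q = ⊤) (he : ∀ q, W q ≤ (W (q + 1)).comap e) (n : ℕ) :
    LinearMap.range (e ^ n) ≤ ⨆ q, W (q + n) := by
  rw [LinearMap.range_eq_map, ← hW, Submodule.map_iSup]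
  exact iSup_mono fun q ↦
    Submodule.map_le_iff_le_comap.mpr (le_comap_pow_of_le_comap_add_one he n q)

lemma disjoint_range_pow_of_lt {W : ℕ → Submodule R M} (hW : DirectSum.IsInternal W)
    (he : ∀ q, W q ≤ (W (q + 1)).comap e) {p n : ℕ} (hpn : p < n) :
    Disjoint (W p) (LinearMap.range (e ^ n)) := by
  refine (hW.submodule_iSupIndep p).mono_right ?_
  calc LinearMap.range (e ^ n) ≤ ⨆ q, W (q + n) :=
        range_pow_le_iSup_add hW.submodule_iSup_eq_top he n
    _ ≤ ⨆ q, ⨆ (_ : q ≠ p), W q :=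
        iSup_le fun q ↦ le_iSup₂_of_le (q + n) (by lia) le_rfl

end DegreeOne

section PrimitiveVector

variable {R L M : Type*} [CommRing R] [LieRing L] [LieAlgebra R L]
  [AddCommGroup M] [Module R M] [LieRingModule L M] [LieModule R L M]
  {h e f : L} {t : IsSl2Triple h e f} {v : M}

lemma toEnd_e_pow_toEnd_f_pow_apply {μ : R} (P : t.HasPrimitiveVectorWith v μ) (i : ℕ) :
    (toEnd R L M e ^ i) ((toEnd R L M f ^ i) v) =
      ((i ! : R) * (descPochhammer R i).eval μ) • v := by
  induction i with
  | zero => simp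
  | succ i ih =>
    rw [pow_succ (toEnd R L M e), End.mul_apply, toEnd_apply_apply, P.lie_e_pow_succ_toEnd_f,
      map_smul, ih, smul_smul, descPochhammer_succ_eval, Nat.factorial_succ]
    congr 1
    push_cast
    ring

lemma toEnd_e_pow_toEnd_f_pow_apply_of_natCast {n : ℕ}
    (P : t.HasPrimitiveVectorWith v (n : R)) :
    (toEnd R L M e ^ n) ((toEnd R L M f ^ n) v) = (n ! ^ 2) • v := by
  rw [toEnd_e_pow_toEnd_f_pow_apply P, descPochhammer_eval_eq_descFactorial,
    Nat.descFactorial_self, ← Nat.cast_smul_eq_nsmul R, Nat.cast_pow, sq]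

lemma weight_le_degree_of_hasPrimitiveVectorWith [IsAddTorsionFree M] {n p : ℕ}
    {W : ℕ → Submodule R M} (hW : DirectSum.IsInternal W)
    (he : ∀ q, W q ≤ (W (q + 1)).comap (toEnd R L M e))
    (P : t.HasPrimitiveVectorWith v (n : R)) (hv : v ∈ W p) : n ≤ p := by
  by_contra! hpn
  have mem_range : (n ! ^ 2) • v ∈ LinearMap.range (toEnd R L M e ^ n) :=
    ⟨_, toEnd_e_pow_toEnd_f_pow_apply_of_natCast P⟩
  have smul_v_eq_zero : (n ! ^ 2) • v = 0 :=
    Submodule.disjoint_def.mp (disjoint_range_pow_of_lt hW he hpn) _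
      ((W p).nsmul_mem hv _) mem_range
  exact P.ne_zero ((nsmul_eq_zero_iff_right (by positivity)).mp smul_v_eq_zero)

end PrimitiveVector

section Endomorphisms

attribute [local instance] LieRing.ofAssociativeRing

lemma isSl2Triple_end_of_comp {R V : Type*} [CommRing R] [AddCommGroup V] [Module R V]
    {e h f : V →ₗ[R] V} (h_ne_zero : h ≠ 0)
    (he2 : h ∘ₗ e - e ∘ₗ h = (2 : R) • e)
    (hf2 : h ∘ₗ f - f ∘ₗ h = (-2 : R) • f)
    (hef : e ∘ₗ f - f ∘ₗ e = h) :
    IsSl2Triple (L := End R V) h e f where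
  h_ne_zero := h_ne_zero
  lie_e_f := hef
  lie_h_e_nsmul := he2.trans (ofNat_smul_eq_nsmul R 2 e)
  lie_h_f_nsmul := hf2.trans (by rw [neg_smul, ofNat_smul_eq_nsmul R 2 f])

theorem sl2_highest_weights_range_on_graded_piece_general {R V : Type*} [CommRing R] [IsDomain R]
    [CharZero R] [AddCommGroup V] [Module R V] [IsTorsionFree R V] [IsNoetherian R V]
    (W : ℕ → Submodule R V) (hW : DirectSum.IsInternal W)
    (e h f : V →ₗ[R] V)
    (he2 : h ∘ₗ e - e ∘ₗ h = (2 : R) • e)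
    (hf2 : h ∘ₗ f - f ∘ₗ h = (-2 : R) • f)
    (hef : e ∘ₗ f - f ∘ₗ e = h)
    (hdeg_e : ∀ p, ∀ x ∈ W p, e x ∈ W (p + 1))
    {p : ℕ} {v : V} (hv : v ∈ W p) (hv0 : v ≠ 0) (hev : e v = 0) {c : R} (hc : h v = c • v) :
    ∃ n : ℕ, c = n ∧ n ≤ p := by
  by_cases hh : h = 0
  · have smul_v_eq_zero : c • v = 0 := by rw [← hc, hh, LinearMap.zero_apply]
    exact ⟨0, by simpa [hv0] using smul_v_eq_zero, p.zero_le⟩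
  · have t := isSl2Triple_end_of_comp hh he2 hf2 hef
    have P : t.HasPrimitiveVectorWith v c := ⟨hv0, hc, hev⟩
    obtain ⟨n, rfl⟩ := P.exists_nat
    have : IsAddTorsionFree V := .of_isTorsionFree R V
    have he : ∀ q, W q ≤ (W (q + 1)).comap (toEnd R (End R V) V e) := hdeg_e
    exact ⟨n, rfl, weight_le_degree_of_hasPrimitiveVectorWith hW he P hv⟩

end Endomorphisms

/-- In the setting of a finite-dimensional graded complex vector space
`V = ⊕_{p=0}^{l-1} W_p` with an `sl₂`-triple `(e, h, f)`, `e` of degree `+1` and `h`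
of degree `0`, every `h`-eigenvalue of a nonzero highest weight vector (`e v = 0`)
lying in `W_p` is an integer `m` with `0 ≤ m ≤ p`. -/
theorem sl2_highest_weights_range_on_graded_piece {V : Type*} [AddCommGroup V]
    [Module ℂ V] [FiniteDimensional ℂ V] (l : ℕ) (hl : 1 ≤ l)
    (W : ℕ → Submodule ℂ V) (hWbot : ∀ p, l ≤ p → W p = ⊥)
    (hW : DirectSum.IsInternal W)
    (e h f : V →ₗ[ℂ] V)
    (he2 : h ∘ₗ e - e ∘ₗ h = (2 : ℂ) • e)
    (hf2 : h ∘ₗ f - f ∘ₗ h = (-2 : ℂ) • f)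
    (hef : e ∘ₗ f - f ∘ₗ e = h)
    (hdeg_e : ∀ p, ∀ x ∈ W p, e x ∈ W (p + 1))
    (hdeg_h : ∀ p, ∀ x ∈ W p, h x ∈ W p) :
    ∀ p, p < l → ∀ v ∈ W p, v ≠ 0 → e v = 0 → ∀ c : ℂ, h v = c • v →
      ∃ m : ℤ, c = (m : ℂ) ∧ 0 ≤ m ∧ m ≤ (p : ℤ) := by
  intro p _ v hv hv0 hev c hc
  obtain ⟨n, rfl, hn⟩ :=
    sl2_highest_weights_range_on_graded_piece_general W hW e h f he2 hf2 hef hdeg_e hv hv0 hev hc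
  exact ⟨n, by simp, by simp, mod_cast hn⟩
end
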